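/- Let (A(n))_{n∈ℕ} be a stationary and ergodic sequence of random d×d matrices with entries in ℝ_max such that the positive part of max_{ij} A_{ij}(0) is integrable. Then for every strongly connected component c of 𝒢(A), γ(A^{{c}}) = γ(A^{[c]}) = γ^{[c]}, where A^{[c]} and A^{{c}} denote the sequences of submatrices indexed by F_c and H_c respectively. -/

import Mathlib

open Filter MeasureTheory ProbabilityTheory Topology

noncomputable section

/-- Max-plus action of a `d × d` matrix over `ℝ_max = ℝ ∪ {-∞}` (encoded as `EReal`,
with `⊤` never used) on a vector: `(A ⊗ v) i = max_j (A i j + v j)`. -/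
def mpVec {d : ℕ} (A : Fin d → Fin d → EReal) (v : Fin d → EReal) : Fin d → EReal :=
  fun i => ⨆ j, A i j + v j

/-- `appProd n f v = f 0 ⊗ f 1 ⊗ ⋯ ⊗ f (n-1) ⊗ v` in the max-plus algebra. -/
def appProd {d : ℕ} : ℕ → (ℕ → Fin d → Fin d → EReal) → (Fin d → EReal) → Fin d → EReal
  | 0, _, v => v
  | n + 1, f, v => mpVec (f 0) (appProd n (fun k => f (k + 1)) v)

/-- `xvec f n = f (n-1) ⊗ ⋯ ⊗ f 0 ⊗ 0`; with `f m = A(m)` this is `x(n, 0)`. -/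
def xvec {d : ℕ} (f : ℕ → Fin d → Fin d → EReal) : ℕ → Fin d → EReal
  | 0 => fun _ => 0
  | n + 1 => mpVec (f n) (xvec f n)

/-- `lvec n f = f 0 ⊗ f 1 ⊗ ⋯ ⊗ f (n-1) ⊗ 0`; with `f k = A(-(k+1))` this is `y(n, 0)`. -/
def lvec {d : ℕ} (n : ℕ) (f : ℕ → Fin d → Fin d → EReal) : Fin d → EReal :=
  appProd n f (fun _ => 0)

/-- Multiplication of an extended real by `1/n`. -/
def mpScale (n : ℕ) (x : EReal) : EReal := (((n : ℝ)⁻¹ : ℝ) : EReal) * x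

open Classical in
/-- Restriction of a matrix to the indices in `c`: entries outside `c × c` are `-∞`. -/
def mpRestrict {d : ℕ} (c : Set (Fin d)) (M : Fin d → Fin d → EReal) : Fin d → Fin d → EReal :=
  fun i j => if i ∈ c ∧ j ∈ c then M i j else ⊥

/-- Arc relation of the graph `𝒢(A)` of a random matrix `A`:
`(i,j)` is an arc iff `A ω i j ≠ -∞` with positive probability. -/
def arcRel {Ω : Type*} [MeasurableSpace Ω] (μ : Measure Ω) {d : ℕ}
    (A : Ω → Fin d → Fin d → EReal) (i j : Fin d) : Prop :=
  μ {ω | A ω i j ≠ ⊥} ≠ 0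

/-- `c` is a strongly connected component of the graph with arc relation `r`
(the mutual-reachability class of some node; nodes on no circuit are alone in their class). -/
def IsSCC {d : ℕ} (r : Fin d → Fin d → Prop) (c : Set (Fin d)) : Prop :=
  ∃ i, c = {j | Relation.ReflTransGen r i j ∧ Relation.ReflTransGen r j i}

/-- `i → c` : the node `i` reaches the component `c`. -/
def nodeReach {d : ℕ} (r : Fin d → Fin d → Prop) (i : Fin d) (c : Set (Fin d)) : Prop :=
  ∃ j ∈ c, Relation.ReflTransGen r i j

/-- `c → c'` : the component `c` reaches the component `c'`. -/
def sccReach {d : ℕ} (r : Fin d → Fin d → Prop) (c c' : Set (Fin d)) : Prop :=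
  ∃ i ∈ c, nodeReach r i c'

/-- `γ^{[c]} = max { γ^{(c')} : c → c' }`, where `γ` assigns to each s.c.c. its
maximal Lyapunov exponent. -/
def gammaBrack {d : ℕ} (r : Fin d → Fin d → Prop) (γ : Set (Fin d) → EReal)
    (c : Set (Fin d)) : EReal :=
  ⨆ c', ⨆ (_ : IsSCC r c' ∧ sccReach r c c'), γ c'

/-- The set of nodes `H_c = {c}` : nodes `i` with `c → i → c̃` for some s.c.c. `c̃`
realizing `γ^{(c̃)} = γ^{[c]}`. -/
def Hset {d : ℕ} (r : Fin d → Fin d → Prop) (γ : Set (Fin d) → EReal)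
    (c : Set (Fin d)) : Set (Fin d) :=
  {i | ∃ ct, IsSCC r ct ∧ (∃ j ∈ c, Relation.ReflTransGen r j i) ∧ nodeReach r i ct ∧
    γ ct = gammaBrack r γ c}

/-- `max { γ^{(c)} : c s.c.c. with i → c }`. -/
def limFormula {d : ℕ} (r : Fin d → Fin d → Prop) (γ : Set (Fin d) → EReal) (i : Fin d) : EReal :=
  ⨆ c, ⨆ (_ : IsSCC r c ∧ nodeReach r i c), γ c

/-- `F_c` : the union of the s.c.c.'s reachable from `c`. -/
def Fset {d : ℕ} (r : Fin d → Fin d → Prop) (c : Set (Fin d)) : Set (Fin d) :=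
  {j | ∃ ct, IsSCC r ct ∧ sccReach r c ct ∧ j ∈ ct}


/-- Running maxima of Birkhoff sums, defined recursively. -/
def mxSum {Ω : Type*} (θ : Ω → Ω) (f : Ω → ℝ) : ℕ → Ω → ℝ
  | 0 => fun _ => 0
  | n + 1 => fun ω => max 0 (f ω + mxSum θ f n (θ ω))

section Erg

variable {Ω : Type*} [MeasurableSpace Ω] {μ : Measure Ω} [IsProbabilityMeasure μ]
  {θ : Ω → Ω}

lemma mxSum_nonneg {Ω : Type*} (θ : Ω → Ω) (f : Ω → ℝ) (n : ℕ) (ω : Ω) : 0 ≤ mxSum θ f n ω := by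
  cases n with
  | zero => exact le_refl _
  | succ n => exact le_max_left _ _

lemma mxSum_le_succ {Ω : Type*} (θ : Ω → Ω) (f : Ω → ℝ) (n : ℕ) (ω : Ω) :
    mxSum θ f n ω ≤ mxSum θ f (n + 1) ω := by
  induction n generalizing ω with
  | zero => exact le_max_left _ _
  | succ n ih =>
    have := ih (θ ω)
    show max 0 (f ω + mxSum θ f n (θ ω)) ≤ max 0 (f ω + mxSum θ f (n + 1) (θ ω))
    gcongr

lemma mxSum_mono {Ω : Type*} (θ : Ω → Ω) (f : Ω → ℝ) (ω : Ω) :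
    Monotone (fun n => mxSum θ f n ω) :=
  monotone_nat_of_le_succ fun n => mxSum_le_succ θ f n ω

lemma birk_le_mxSum {Ω : Type*} (θ : Ω → Ω) (f : Ω → ℝ) (n : ℕ) (ω : Ω) :
    birkhoffSum θ f n ω ≤ mxSum θ f n ω := by
  induction n generalizing ω with
  | zero => simp [mxSum]
  | succ n ih =>
    rw [birkhoffSum_succ']
    refine le_trans ?_ (le_max_right _ _)
    have := ih (θ ω)
    linarith

lemma mxSum_meas (hθ : Measurable θ) {f : Ω → ℝ} (hf : Measurable f) (n : ℕ) :
    Measurable (mxSum θ f n) := by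
  induction n with
  | zero => exact measurable_const
  | succ n ih => exact measurable_const.max (hf.add (ih.comp hθ))

lemma mxSum_int (hθ : MeasurePreserving θ μ μ) {f : Ω → ℝ} (hi : Integrable f μ) (n : ℕ) :
    Integrable (mxSum θ f n) μ := by
  induction n with
  | zero => exact integrable_zero _ _ _
  | succ n ih =>
    exact (integrable_zero _ _ _).sup (hi.add (hθ.integrable_comp_of_integrable ih))

lemma birk_bdd (hθ : Ergodic θ μ) {f : Ω → ℝ} (hf : Measurable f) (hi : Integrable f μ)
    (hneg : ∫ ω, f ω ∂μ < 0) : ∀ᵐ ω ∂μ, ∃ C : ℝ, ∀ n, birkhoffSum θ f n ω ≤ C := by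
  have hmp := hθ.toMeasurePreserving
  set E : Set Ω := {ω | ∀ k : ℕ, ∃ n, (k : ℝ) < mxSum θ f n ω} with hE
  have hEm : MeasurableSet E := by
    have : E = ⋂ k : ℕ, ⋃ n : ℕ, {ω | (k : ℝ) < mxSum θ f n ω} := by
      ext ω; simp [hE]
    rw [this]
    exact MeasurableSet.iInter fun k => MeasurableSet.iUnion fun n =>
      measurableSet_lt measurable_const (mxSum_meas hmp.measurable hf n)
  have hinv : θ ⁻¹' E = E := by
    ext ω
    simp only [hE, Set.mem_preimage, Set.mem_ofPred_eq]
    constructor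
    · intro h k
      obtain ⟨k', hk'⟩ := exists_nat_ge ((k : ℝ) - f ω)
      obtain ⟨n, hn⟩ := h k'
      refine ⟨n + 1, lt_of_lt_of_le ?_ (le_max_right _ _)⟩
      linarith
    · intro h k
      obtain ⟨k', hk'⟩ := exists_nat_ge ((k : ℝ) + f ω)
      obtain ⟨n, hn⟩ := h k'
      refine ⟨n, ?_⟩
      have h2 := lt_of_lt_of_le hn (mxSum_le_succ θ f n ω)
      rcases lt_max_iff.1 h2 with h3 | h3
      · exact absurd h3 (not_lt.2 (Nat.cast_nonneg _))
      · linarith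
  rcases hθ.toPreErgodic.ae_mem_or_ae_notMem hEm hinv with h | h
  · exfalso
    set D : ℕ → Ω → ℝ := fun n ω => mxSum θ f (n + 1) ω - mxSum θ f n (θ ω) with hD
    have hDeq : ∀ n ω, D n ω = max (- mxSum θ f n (θ ω)) (f ω) := by
      intro n ω
      show max 0 (f ω + mxSum θ f n (θ ω)) - mxSum θ f n (θ ω) = _
      rw [max_sub_sub_right 0 _ _ |>.symm]
      congr 1 <;> ring
    have hlim : Tendsto (fun n => ∫ ω, D n ω ∂μ) atTop (𝓝 (∫ ω, f ω ∂μ)) := by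
      refine tendsto_integral_of_dominated_convergence (fun ω => |f ω|) ?_ hi.abs ?_ ?_
      · intro n
        exact ((mxSum_meas hmp.measurable hf (n+1)).sub
          ((mxSum_meas hmp.measurable hf n).comp hmp.measurable)).aestronglyMeasurable
      · intro n
        refine Eventually.of_forall fun ω => ?_
        rw [hDeq, Real.norm_eq_abs]
        have h0 := mxSum_nonneg θ f n (θ ω)
        rcases le_total (-mxSum θ f n (θ ω)) (f ω) with h1 | h1
        · rw [max_eq_right h1]
        · rw [max_eq_left h1, abs_of_nonpos (by linarith), abs_of_nonpos (by linarith)]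
          linarith
      · filter_upwards [h] with ω hω
        have hω' : θ ω ∈ E := by rw [← hinv] at hω; exact hω
        obtain ⟨k, hk⟩ := exists_nat_ge (- f ω)
        obtain ⟨n, hn⟩ := hω' k
        refine tendsto_const_nhds.congr' ?_
        filter_upwards [eventually_ge_atTop n] with m hm
        have := mxSum_mono θ f (θ ω) hm
        rw [hDeq, max_eq_right]
        simp only at this
        linarith
    have hge : ∀ n, 0 ≤ ∫ ω, D n ω ∂μ := by
      intro n
      have h1 := mxSum_int hmp hi n
      have h2 := mxSum_int hmp hi (n + 1)
      have h3 : ∫ ω, mxSum θ f n (θ ω) ∂μ = ∫ ω, mxSum θ f n ω ∂μ := by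
        have := integral_map (μ := μ) hmp.measurable.aemeasurable
          (f := mxSum θ f n) (mxSum_meas hmp.measurable hf n).aestronglyMeasurable
        rw [hmp.map_eq] at this
        exact this.symm
      have h4 : ∫ ω, D n ω ∂μ = ∫ ω, mxSum θ f (n + 1) ω ∂μ - ∫ ω, mxSum θ f n (θ ω) ∂μ :=
        integral_sub h2 (hmp.integrable_comp_of_integrable h1)
      rw [h4, h3, sub_nonneg]
      exact integral_mono h1 h2 fun ω => mxSum_le_succ θ f n ω
    exact absurd (ge_of_tendsto' hlim hge) (not_le.2 hneg)
  · filter_upwards [h] with ω hω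
    simp only [hE, Set.mem_ofPred_eq, not_forall, not_exists, not_lt] at hω
    obtain ⟨k, hk⟩ := hω
    exact ⟨k, fun n => (birk_le_mxSum θ f n ω).trans (hk n)⟩

lemma birk_upper (hθ : Ergodic θ μ) {f : Ω → ℝ} (hf : Measurable f) (hi : Integrable f μ)
    {a : ℝ} (ha : ∫ ω, f ω ∂μ < a) : ∀ᵐ ω ∂μ, ∀ᶠ n : ℕ in atTop, birkhoffSum θ f n ω ≤ n * a := by
  obtain ⟨a', h1, h2⟩ := exists_between ha
  have := birk_bdd hθ (f := fun ω => f ω - a') (hf.sub_const _) (hi.sub (integrable_const _)) (by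
    rw [integral_sub hi (integrable_const _)]; simp; linarith)
  filter_upwards [this] with ω ⟨C, hC⟩
  obtain ⟨N, hN⟩ := exists_nat_ge (C / (a - a'))
  filter_upwards [eventually_ge_atTop N] with n hn
  have h3 := hC n
  have h4 : birkhoffSum θ (fun ω => f ω - a') n ω = birkhoffSum θ f n ω - n * a' := by
    simp [birkhoffSum, Finset.sum_sub_distrib]
  rw [h4] at h3
  have h5 : C ≤ n * (a - a') := by
    rw [← div_le_iff₀ (by linarith)]
    exact hN.trans (by exact_mod_cast hn)
  linarith

lemma end_term (hθ : Ergodic θ μ) {f : Ω → ℝ} (hf : Measurable f) (hi : Integrable f μ)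
    {e : ℝ} (he : 0 < e) : ∀ᵐ ω ∂μ, ∀ᶠ n : ℕ in atTop, f (θ^[n] ω) ≤ n * e := by
  set I := ∫ ω, f ω ∂μ with hI
  have h1 := birk_upper hθ hf hi (a := I + e / 4) (by linarith)
  have h2 := birk_upper hθ hf.neg hi.neg (a := - I + e / 4) (by
    simp only [Pi.neg_apply]; rw [integral_neg]; linarith)
  filter_upwards [h1, h2] with ω h1 h2
  obtain ⟨N, hN⟩ := exists_nat_ge ((I + e / 4) / (e / 2))
  filter_upwards [(tendsto_add_atTop_nat 1).eventually h1, h2, eventually_ge_atTop N] with n h1 h2 hn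
  rw [birkhoffSum_succ] at h1
  have h4 : birkhoffSum θ (-f) n ω = - birkhoffSum θ f n ω := by
    simp [birkhoffSum]
  rw [h4] at h2
  push_cast at h1
  have h5 : I + e / 4 ≤ n * (e / 2) := by
    rw [← div_le_iff₀ (by linarith)]
    exact hN.trans (by exact_mod_cast hn)
  linarith

lemma subadd_sum {Ω : Type*} {θ : Ω → Ω} {P : ℕ → Ω → ℝ}
    (hsub : ∀ m n ω, P (m + n) ω ≤ P m ω + P n (θ^[m] ω)) (k n : ℕ) (ω : Ω) :
    ∑ r ∈ Finset.range (k + 1), P (n + (k + 1 - r)) (θ^[r] ω) ≤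
      birkhoffSum θ (P (k + 1)) n ω
        + ∑ r ∈ Finset.range (k + 1), P (k + 1 - r) (θ^[r] (θ^[n] ω)) := by
  induction n generalizing ω with
  | zero => simp
  | succ n ih =>
    have h1 := ih (θ ω)
    rw [Finset.sum_range_succ] at h1
    rw [Finset.sum_range_succ', birkhoffSum_succ']
    have h2 := hsub (k + 1) (n + 1) ω
    have h3 : ∑ r ∈ Finset.range k, P (n + 1 + (k + 1 - (r + 1))) (θ^[r + 1] ω)
        = ∑ r ∈ Finset.range k, P (n + (k + 1 - r)) (θ^[r] (θ ω)) := by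
      refine Finset.sum_congr rfl fun r hr => ?_
      have := Finset.mem_range.1 hr
      rw [Function.iterate_succ_apply]
      congr 1
      omega
    rw [h3]
    have h4 : n + 1 + (k + 1 - 0) = k + 1 + (n + 1) := by omega
    have h5 : n + (k + 1 - k) = n + 1 := by omega
    rw [h5, ← Function.iterate_succ_apply] at h1
    simp only [← Function.iterate_succ_apply θ n] at h1
    rw [h4]
    simp only [Function.iterate_zero, id]
    linarith

lemma kingman_upper (hθ : Ergodic θ μ) {P : ℕ → Ω → ℝ} (hm : ∀ n, Measurable (P n))
    (hi : ∀ n, Integrable (P n) μ) (h0 : ∀ n ω, 0 ≤ P n ω)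
    (hsub : ∀ m n ω, P (m + n) ω ≤ P m ω + P n (θ^[m] ω)) (k : ℕ) {a : ℝ}
    (ha : ∫ ω, P (k + 1) ω ∂μ < (k + 1) * a) :
    ∀ᵐ ω ∂μ, ∀ᶠ n : ℕ in atTop, P n ω ≤ n * a := by
  have hmp := hθ.toMeasurePreserving
  have hk : (0 : ℝ) < k + 1 := by positivity
  have ha0 : 0 < a := by
    have : 0 ≤ ∫ ω, P (k + 1) ω ∂μ := integral_nonneg (h0 _)
    exact pos_of_mul_pos_right (this.trans_lt ha) hk.le
  obtain ⟨b, h1, h2⟩ := exists_between ha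
  set w : Ω → ℝ := fun ω => ∑ r ∈ Finset.range (k + 1), P (k + 1 - r) (θ^[r] ω) with hw
  have hwm : Measurable w := Finset.measurable_fun_sum _ fun r _ =>
    (hm _).comp (hmp.measurable.iterate r)
  have hwi : Integrable w μ := integrable_finsetSum _ fun r _ =>
    (hmp.iterate r).integrable_comp_of_integrable (hi _)
  set e := ((k + 1) * a - b) / 2 with he
  filter_upwards [birk_upper hθ (hm _) (hi _) h1, end_term hθ hwm hwi (e := e) (by linarith)]
    with ω hb hwe
  set C := ∑ r ∈ Finset.range (k + 1), P r ω with hC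
  obtain ⟨N, hN⟩ := exists_nat_ge (C / e)
  have key : ∀ᶠ n : ℕ in atTop, P (n + (k + 1)) ω ≤ ((n + (k + 1) : ℕ) : ℝ) * a := by
    filter_upwards [hb, hwe, eventually_ge_atTop N] with n hb hwe hn
    have h3 := subadd_sum hsub k n ω
    have h4 : ((k + 1 : ℕ) : ℝ) * P (n + (k + 1)) ω ≤
        C + ∑ r ∈ Finset.range (k + 1), P (n + (k + 1 - r)) (θ^[r] ω) := by
      rw [hC, ← Finset.sum_add_distrib]
      have : ((k + 1 : ℕ) : ℝ) * P (n + (k + 1)) ω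
        = ∑ r ∈ Finset.range (k + 1), P (n + (k + 1)) ω := by simp
      rw [this]
      refine Finset.sum_le_sum fun r hr => ?_
      have := Finset.mem_range.1 hr
      have h5 := hsub r (n + (k + 1 - r)) ω
      rwa [show r + (n + (k + 1 - r)) = n + (k + 1) by omega] at h5
    have h5 : C ≤ n * e := by
      rw [← div_le_iff₀ (by linarith)]
      exact hN.trans (by exact_mod_cast hn)
    have h6 : (k + 1 : ℝ) * P (n + (k + 1)) ω ≤ (k + 1) * (n * a) := by
      push_cast at h4
      have : (n : ℝ) * b + n * e + n * e = (k + 1) * (n * a) := by rw [he]; ring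
      simp only [hw] at hwe
      linarith
    have h7 := le_of_mul_le_mul_left h6 hk
    push_cast
    nlinarith
  rw [eventually_atTop] at key ⊢
  obtain ⟨M, hM⟩ := key
  refine ⟨M + (k + 1), fun n hn => ?_⟩
  have := hM (n - (k + 1)) (by omega)
  rwa [show n - (k + 1) + (k + 1) = n by omega] at this

end Erg

section Det

lemma xvec_add {d : ℕ} (f : ℕ → Fin d → Fin d → EReal) (m n : ℕ) (i : Fin d) :
    xvec f (m + n) i ≤ (⨆ j, xvec f m j) + xvec (fun k => f (m + k)) n i := by
  induction n generalizing i with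
  | zero =>
    simp only [xvec, add_zero]
    exact le_iSup (fun j => xvec f m j) i
  | succ n ih =>
    show (⨆ j, f (m + n) i j + xvec f (m + n) j) ≤ _
    refine iSup_le fun j => ?_
    refine (add_le_add le_rfl (ih j)).trans ?_
    rw [add_left_comm]
    exact add_le_add le_rfl (le_iSup (fun j => f (m + n) i j + xvec (fun k => f (m + k)) n j) j)

lemma xvec_mono {d : ℕ} {f g : ℕ → Fin d → Fin d → EReal} (h : ∀ k i j, f k i j ≤ g k i j)
    (n : ℕ) (i : Fin d) : xvec f n i ≤ xvec g n i := by
  induction n generalizing i with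
  | zero => exact le_rfl
  | succ n ih => exact iSup_mono fun j => add_le_add (h n i j) (ih j)

lemma xvec_le_sum {d : ℕ} {f : ℕ → Fin d → Fin d → EReal} {b : ℕ → ℝ}
    (h : ∀ k i j, f k i j ≤ (b k : EReal)) (n : ℕ) (i : Fin d) :
    xvec f n i ≤ ((∑ k ∈ Finset.range n, b k : ℝ) : EReal) := by
  induction n generalizing i with
  | zero => simp [xvec]
  | succ n ih =>
    refine iSup_le fun j => ?_
    rw [Finset.sum_range_succ, add_comm (∑ k ∈ Finset.range n, b k), EReal.coe_add]
    exact add_le_add (h n i j) (ih j)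

lemma xvec_compare {d : ℕ} {f g : ℕ → Fin d → Fin d → EReal} {u : Fin d → ℝ} {L : ℝ}
    (hu : ∀ i, 0 ≤ u i)
    (h : ∀ k i j, f k i j ≤ g k i j + ((u i - u j - L : ℝ) : EReal)) (n : ℕ) (i : Fin d) :
    xvec f n i ≤ xvec g n i + ((u i - n * L : ℝ) : EReal) := by
  induction n generalizing i with
  | zero =>
    simp only [xvec, zero_add]
    have := hu i
    exact_mod_cast (by simpa using this)
  | succ n ih =>
    refine iSup_le fun j => ?_
    refine (add_le_add (h n i j) (ih j)).trans ?_
    rw [add_add_add_comm, ← EReal.coe_add]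
    refine add_le_add (le_iSup (fun j => g n i j + xvec g n j) j) ?_
    rw [EReal.coe_le_coe_iff]
    push_cast
    linarith

lemma xvec_empty {d : ℕ} {f : ℕ → Fin d → Fin d → EReal} {i : Fin d} (h : ∀ k j, f k i j = ⊥)
    {n : ℕ} (hn : n ≠ 0) : xvec f n i = ⊥ := by
  obtain ⟨n, rfl⟩ := Nat.exists_eq_succ_of_ne_zero hn
  show (⨆ j, f n i j + xvec f n j) = ⊥
  simp [h]

lemma xvec_meas {d : ℕ} {Ω : Type*} [MeasurableSpace Ω] {f : Ω → ℕ → Fin d → Fin d → EReal}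
    (h : ∀ m i j, Measurable fun ω => f ω m i j) (n : ℕ) (i : Fin d) :
    Measurable fun ω => xvec (f ω) n i := by
  induction n generalizing i with
  | zero => exact measurable_const
  | succ n ih => exact Measurable.iSup fun j => (h n i j).add (ih j)

/-- size of the reachable set -/
def lev {d : ℕ} (r : Fin d → Fin d → Prop) (i : Fin d) : ℝ :=
  (Set.ncard {k | Relation.ReflTransGen r i k} : ℝ)

lemma lev_le {d : ℕ} {r : Fin d → Fin d → Prop} {i j : Fin d} (h : r i j) :
    lev r j ≤ lev r i := by
  unfold lev
  have : Set.ncard {k | Relation.ReflTransGen r j k} ≤ Set.ncard {k | Relation.ReflTransGen r i k} :=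
    Set.ncard_le_ncard (fun k hk => Relation.ReflTransGen.head h hk) (Set.toFinite _)
  exact_mod_cast this

lemma lev_lt {d : ℕ} {r : Fin d → Fin d → Prop} {i j : Fin d} (h : r i j)
    (h' : ¬ Relation.ReflTransGen r j i) : lev r j + 1 ≤ lev r i := by
  unfold lev
  have : Set.ncard {k | Relation.ReflTransGen r j k} < Set.ncard {k | Relation.ReflTransGen r i k} := by
    refine Set.ncard_lt_ncard ⟨fun k hk => Relation.ReflTransGen.head h hk, fun hh => ?_⟩
      (Set.toFinite _)
    exact h' (hh (Relation.ReflTransGen.refl))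
  exact_mod_cast this

lemma lev_eq {d : ℕ} {r : Fin d → Fin d → Prop} {i j : Fin d} (h : r i j)
    (h' : Relation.ReflTransGen r j i) : lev r j = lev r i := by
  refine le_antisymm (lev_le h) ?_
  unfold lev
  have : Set.ncard {k | Relation.ReflTransGen r i k} ≤ Set.ncard {k | Relation.ReflTransGen r j k} :=
    Set.ncard_le_ncard (fun k hk => Relation.ReflTransGen.trans h' hk) (Set.toFinite _)
  exact_mod_cast this

/-- class of `i` inside `F` -/
def clsIn {d : ℕ} (r : Fin d → Fin d → Prop) (F : Set (Fin d)) (i : Fin d) : Set (Fin d) :=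
  {j | i ∈ F ∧ j ∈ F ∧ Relation.ReflTransGen r i j ∧ Relation.ReflTransGen r j i}

open Classical in
/-- the rescaled matrix -/
def bMat {d : ℕ} (r : Fin d → Fin d → Prop) (F : Set (Fin d)) (L lam : ℝ)
    (M : Fin d → Fin d → EReal) : Fin d → Fin d → EReal :=
  fun i j => if i ∈ F ∧ j ∈ F ∧ r i j then M i j + ((L - lam * (lev r i - lev r j) : ℝ) : EReal)
    else ⊥

lemma bMat_le {d : ℕ} {r : Fin d → Fin d → Prop} {F : Set (Fin d)} {L lam a : ℝ} (hlam : 0 ≤ lam)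
    {M : Fin d → Fin d → EReal} (h : ∀ i j, M i j ≤ (a : EReal)) (i j : Fin d) :
    bMat r F L lam M i j ≤ ((a + L : ℝ) : EReal) := by
  unfold bMat
  split_ifs with hc
  · rw [EReal.coe_add]
    refine add_le_add (h i j) ?_
    rw [EReal.coe_le_coe_iff]
    have := mul_nonneg hlam (sub_nonneg.2 (lev_le hc.2.2))
    linarith
  · exact bot_le

lemma xvec_dom {d : ℕ} {r : Fin d → Fin d → Prop} {F : Set (Fin d)} {L lam : ℝ} (hlam : 0 ≤ lam)
    {f : ℕ → Fin d → Fin d → EReal} {a : ℕ → ℝ} (h : ∀ k i j, f k i j ≤ (a k : EReal))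
    (n : ℕ) (i : Fin d) :
    xvec (fun k => bMat r F L lam (f k)) n i ≤
      max (xvec (fun k => mpRestrict (clsIn r F i) (f k)) n i + ((n * L : ℝ) : EReal))
        ((∑ k ∈ Finset.range n, (a k + L) - lam : ℝ) : EReal) := by
  induction n generalizing i with
  | zero => simp [xvec]
  | succ n ih =>
    refine iSup_le fun j => ?_
    beta_reduce
    by_cases hc : i ∈ F ∧ j ∈ F ∧ r i j
    swap
    · simp only [bMat, if_neg hc, EReal.bot_add]
      exact bot_le
    by_cases hr : Relation.ReflTransGen r j i
    · have hcl : clsIn r F j = clsIn r F i := by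
        ext k
        simp only [clsIn, Set.mem_ofPred_eq]
        have hij := Relation.ReflTransGen.single hc.2.2
        exact ⟨fun ⟨_, h2, h3, h4⟩ => ⟨hc.1, h2, hij.trans h3, h4.trans hr⟩,
          fun ⟨_, h2, h3, h4⟩ => ⟨hc.2.1, h2, hr.trans h3, h4.trans hij⟩⟩
      have hB : bMat r F L lam (f n) i j = f n i j + (L : EReal) := by
        simp only [bMat, if_pos hc, lev_eq hc.2.2 hr]
        simp
      have hi := ih j
      rw [hcl] at hi
      rw [hB]
      rcases le_max_iff.1 hi with h1 | h1
      · refine le_trans ?_ (le_max_left _ _)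
        refine (add_le_add le_rfl h1).trans ?_
        rw [add_add_add_comm, ← EReal.coe_add]
        have hR : mpRestrict (clsIn r F i) (f n) i j = f n i j := by
          unfold mpRestrict
          rw [if_pos]
          exact ⟨⟨hc.1, hc.1, .refl, .refl⟩, ⟨hc.1, hc.2.1, .single hc.2.2, hr⟩⟩
        refine add_le_add ?_ ?_
        · rw [← hR]
          exact le_iSup (fun j => mpRestrict (clsIn r F i) (f n) i j +
            xvec (fun k => mpRestrict (clsIn r F i) (f k)) n j) j
        · rw [EReal.coe_le_coe_iff]; push_cast; linarith
      · refine le_trans ?_ (le_max_right _ _)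
        refine (add_le_add (add_le_add (h n i j) le_rfl) h1).trans ?_
        rw [← EReal.coe_add, ← EReal.coe_add, EReal.coe_le_coe_iff, Finset.sum_range_succ]
        linarith
    · refine le_trans ?_ (le_max_right _ _)
      have hB : bMat r F L lam (f n) i j ≤ ((a n + L - lam : ℝ) : EReal) := by
        simp only [bMat, if_pos hc]
        refine (add_le_add (h n i j) le_rfl).trans ?_
        rw [← EReal.coe_add, EReal.coe_le_coe_iff]
        have h1 := lev_lt hc.2.2 hr
        nlinarith
      have h2 := xvec_le_sum (fun k => bMat_le (r := r) (F := F) (L := L) hlam (h k)) n j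
      refine (add_le_add hB h2).trans ?_
      rw [← EReal.coe_add, EReal.coe_le_coe_iff, Finset.sum_range_succ]
      linarith

/-- real positive part -/
def posR (x : EReal) : ℝ := (x ⊔ 0).toReal

lemma posR_nonneg (x : EReal) : 0 ≤ posR x := EReal.toReal_nonneg le_sup_right

lemma posR_le {x : EReal} {y : ℝ} (h : x ≤ (y : EReal)) (hy : 0 ≤ y) : posR x ≤ y := by
  unfold posR
  have h1 : x ⊔ 0 ≤ (y : EReal) := sup_le h (by exact_mod_cast hy)
  have := EReal.toReal_le_toReal h1 (ne_of_gt (lt_of_lt_of_le EReal.bot_lt_zero le_sup_right))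
    (EReal.coe_ne_top y)
  simpa using this

lemma le_posR {x : EReal} {y : ℝ} (h : x ≤ (y : EReal)) : x ≤ (posR x : EReal) := by
  unfold posR
  rw [EReal.coe_toReal]
  · exact le_sup_left
  · exact ne_of_lt (sup_lt_iff.2 ⟨h.trans_lt (EReal.coe_lt_top y), EReal.zero_lt_top⟩)
  · exact ne_of_gt (lt_of_lt_of_le EReal.bot_lt_zero le_sup_right)

lemma posR_meas {Ω : Type*} [MeasurableSpace Ω] {f : Ω → EReal} (h : Measurable f) :
    Measurable fun ω => posR (f ω) := (h.sup measurable_const).ereal_toReal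

lemma mpScale_le {n : ℕ} (hn : n ≠ 0) (x : EReal) (q : ℝ) :
    mpScale n x ≤ (q : EReal) ↔ x ≤ ((n * q : ℝ) : EReal) := by
  have hn' : (0 : ℝ) < n := by exact_mod_cast Nat.pos_of_ne_zero hn
  unfold mpScale
  induction x using EReal.rec with
  | bot => rw [EReal.coe_mul_bot_of_pos (inv_pos.2 hn')]; simp
  | top => rw [EReal.coe_mul_top_of_pos (inv_pos.2 hn')]; simp [EReal.coe_ne_top, -EReal.coe_mul]
  | coe x =>
    rw [← EReal.coe_mul, EReal.coe_le_coe_iff, EReal.coe_le_coe_iff, inv_mul_le_iff₀ hn']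

lemma mpScale_mono (n : ℕ) {x y : EReal} (h : x ≤ y) : mpScale n x ≤ mpScale n y := by
  unfold mpScale
  exact mul_le_mul_of_nonneg_left h (by exact_mod_cast (by positivity : (0 : ℝ) ≤ (n : ℝ)⁻¹))

lemma mpRestrict_mono {d : ℕ} {S T : Set (Fin d)} (h : S ⊆ T) (M : Fin d → Fin d → EReal)
    (i j : Fin d) : mpRestrict S M i j ≤ mpRestrict T M i j := by
  unfold mpRestrict
  split_ifs with h1 h2 h2
  · exact le_rfl
  · exact absurd ⟨h h1.1, h h1.2⟩ h2
  · exact bot_le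
  · exact le_rfl

lemma tail_small {Ω : Type*} [MeasurableSpace Ω] {μ : Measure Ω} {h : Ω → ℝ} (hi : Integrable h μ)
    {e : ℝ} (he : 0 < e) : ∃ n : ℕ, ∫ ω, max (h ω - n) 0 ∂μ < e := by
  have : Tendsto (fun n : ℕ => ∫ ω, max (h ω - n) 0 ∂μ) atTop (𝓝 (∫ _, (0 : ℝ) ∂μ)) := by
    refine tendsto_integral_of_dominated_convergence (fun ω => |h ω|) ?_ hi.abs ?_ ?_
    · intro n
      exact (hi.aestronglyMeasurable.sub aestronglyMeasurable_const).sup aestronglyMeasurable_const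
    · intro n
      refine Eventually.of_forall fun ω => ?_
      have hn : (0 : ℝ) ≤ n := Nat.cast_nonneg n
      rw [Real.norm_eq_abs, abs_of_nonneg (le_max_right _ _)]
      exact max_le (by linarith [le_abs_self (h ω)]) (abs_nonneg _)
    · refine Eventually.of_forall fun ω => ?_
      obtain ⟨N, hN⟩ := exists_nat_ge (h ω)
      refine tendsto_const_nhds.congr' ?_
      filter_upwards [eventually_ge_atTop N] with n hn
      rw [max_eq_right]
      have : (N : ℝ) ≤ n := by exact_mod_cast hn
      linarith
  rw [integral_zero] at this
  exact (this.eventually_lt_const he).exists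

end Det

section Main

lemma upper_main {d : ℕ} {Ω : Type*} [MeasurableSpace Ω] {μ : Measure Ω} [IsProbabilityMeasure μ]
    {θ : Ω → Ω} (hθ : Ergodic θ μ) {A : Ω → Fin d → Fin d → EReal} (hA : Measurable A)
    {a : Ω → ℝ} (ham : Measurable a) (hai : Integrable a μ) (ha0 : ∀ ω, 0 ≤ a ω)
    (hAa : ∀ ω i j, A ω i j ≤ (a ω : EReal))
    (F : Set (Fin d)) {q0 q : ℝ} (hq : q0 < q)
    (hcls : ∀ i ∈ F, ∀ᵐ ω ∂μ, ∀ᶠ n : ℕ in atTop,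
      xvec (fun m => mpRestrict (clsIn (arcRel μ A) F i) (A (θ^[m] ω))) n i
        ≤ ((n * q0 : ℝ) : EReal)) :
    ∀ᵐ ω ∂μ, ∀ᶠ n : ℕ in atTop, ∀ i,
      xvec (fun m => mpRestrict F (A (θ^[m] ω))) n i ≤ ((n * q : ℝ) : EReal) := by
  have hmp := hθ.toMeasurePreserving
  set r := arcRel μ A with hr
  have hAij : ∀ m i j, Measurable fun ω => A (θ^[m] ω) i j := fun m i j =>
    (measurable_pi_apply j).comp ((measurable_pi_apply i).comp
      (hA.comp (hmp.measurable.iterate m)))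
  obtain ⟨L, hL0, hL⟩ : ∃ L : ℝ, 0 ≤ L ∧ 0 < q0 + L :=
    ⟨|q0| + 1, by positivity, by linarith [neg_abs_le q0]⟩
  set c1 := q0 + L with hc1
  set δ := (q - q0) / 4 with hδ
  have hδ0 : 0 < δ := by rw [hδ]; linarith
  set b : Ω → ℝ := fun ω => a ω + L with hb
  have hbm : Measurable b := ham.add_const L
  have hbi : Integrable b μ := hai.add (integrable_const L)
  have hb0 : ∀ ω, 0 ≤ b ω := fun ω => add_nonneg (ha0 ω) hL0
  set S : ℕ → Ω → ℝ := fun n ω => ∑ k ∈ Finset.range n, b (θ^[k] ω) with hS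
  have hSi : ∀ n, Integrable (S n) μ := fun n => integrable_finsetSum _ fun k _ =>
    (hmp.iterate k).integrable_comp_of_integrable hbi
  have hS0 : ∀ n ω, 0 ≤ S n ω := fun n ω => Finset.sum_nonneg fun k _ => hb0 _
  -- the process G
  set G : ℕ → Ω → ℝ := fun n ω => posR (⨆ i,
    (xvec (fun m => mpRestrict (clsIn r F i) (A (θ^[m] ω))) n i + ((n * L : ℝ) : EReal))) with hG
  have hRm : ∀ (T : Set (Fin d)) m i j, Measurable fun ω => mpRestrict T (A (θ^[m] ω)) i j := by
    intro T m i j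
    unfold mpRestrict
    split_ifs
    · exact hAij m i j
    · exact measurable_const
  have hGm : ∀ n, Measurable (G n) := fun n => posR_meas <| Measurable.iSup fun i =>
    (xvec_meas (fun m i' j => hRm _ m i' j) n i).add measurable_const
  have hRa : ∀ (T : Set (Fin d)) ω i j, mpRestrict T (A ω) i j ≤ (a ω : EReal) := by
    intro T ω i j
    unfold mpRestrict
    split_ifs
    · exact hAa ω i j
    · exact bot_le
  have hGsup : ∀ n ω i, xvec (fun m => mpRestrict (clsIn r F i) (A (θ^[m] ω))) n i
      + ((n * L : ℝ) : EReal) ≤ (S n ω : EReal) := by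
    intro n ω i
    have h1 := xvec_le_sum (fun k => hRa (clsIn r F i) (θ^[k] ω)) n i
    refine (add_le_add h1 le_rfl).trans ?_
    rw [← EReal.coe_add, EReal.coe_le_coe_iff]
    simp [hS, hb, Finset.sum_add_distrib]
  have hGS : ∀ n ω, G n ω ≤ S n ω := fun n ω =>
    posR_le (iSup_le fun i => hGsup n ω i) (hS0 n ω)
  have hGi : ∀ n, Integrable (G n) μ := fun n => (hSi n).mono' (hGm n).aestronglyMeasurable
    (Eventually.of_forall fun ω => by
      rw [Real.norm_eq_abs, abs_of_nonneg (posR_nonneg _)]; exact hGS n ω)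
  have hGev : ∀ᵐ ω ∂μ, ∀ᶠ n : ℕ in atTop, G n ω ≤ n * c1 := by
    have h1 : ∀ i, ∀ᵐ ω ∂μ, ∀ᶠ n : ℕ in atTop,
        xvec (fun m => mpRestrict (clsIn r F i) (A (θ^[m] ω))) n i ≤ ((n * q0 : ℝ) : EReal) := by
      intro i
      by_cases hi : i ∈ F
      · exact hcls i hi
      · refine Eventually.of_forall fun ω => ?_
        filter_upwards [eventually_ne_atTop 0] with n hn
        rw [xvec_empty _ hn]
        · exact bot_le
        · intro k j
          unfold mpRestrict
          rw [if_neg]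
          exact fun h => hi h.1.1
    filter_upwards [ae_all_iff.2 h1] with ω hω
    filter_upwards [eventually_all.2 hω] with n hn
    refine posR_le (iSup_le fun i => ?_) (by positivity)
    refine (add_le_add (hn i) le_rfl).trans ?_
    rw [← EReal.coe_add, EReal.coe_le_coe_iff, hc1]
    linarith
  -- choose C
  obtain ⟨C, hC⟩ := tail_small hbi hδ0
  -- choose K
  obtain ⟨k, hk⟩ : ∃ k : ℕ, ∫ ω, max (min (G (k + 1) ω / (k + 1)) C) c1 ∂μ < c1 + δ := by
    have : Tendsto (fun k : ℕ => ∫ ω, max (min (G (k + 1) ω / (k + 1)) C) c1 ∂μ) atTop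
        (𝓝 (∫ _, c1 ∂μ)) := by
      refine tendsto_integral_of_dominated_convergence (fun _ => C + c1) ?_
        (integrable_const _) ?_ ?_
      · intro n
        exact ((((hGm _).div_const _).min measurable_const).max
          measurable_const).aestronglyMeasurable
      · intro n
        refine Eventually.of_forall fun ω => ?_
        rw [Real.norm_eq_abs, abs_of_nonneg (hL.le.trans (le_max_right _ _))]
        have : (0 : ℝ) ≤ C := Nat.cast_nonneg C
        exact max_le ((min_le_right _ _).trans (by linarith)) (by linarith)
      · filter_upwards [hGev] with ω hω
        refine tendsto_const_nhds.congr' ?_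
        filter_upwards [(tendsto_add_atTop_nat 1).eventually hω] with n hn
        rw [max_eq_right]
        refine (min_le_left _ _).trans ?_
        rw [div_le_iff₀ (by positivity)]
        push_cast at hn
        linarith
    rw [integral_const] at this
    simp only [probReal_univ, one_smul] at this
    exact (this.eventually_lt_const (by linarith)).exists
  -- choose lam
  obtain ⟨lam, hlam⟩ := tail_small (hSi (k + 1)) hδ0
  have hlam0 : (0 : ℝ) ≤ lam := Nat.cast_nonneg lam
  -- the process P
  set N : ℕ → Ω → EReal := fun n ω => ⨆ i,
    xvec (fun m => bMat r F L lam (A (θ^[m] ω))) n i with hN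
  set P : ℕ → Ω → ℝ := fun n ω => posR (N n ω) with hP
  have hNS : ∀ n ω, N n ω ≤ (S n ω : EReal) := fun n ω => iSup_le fun i =>
    xvec_le_sum (fun k => bMat_le hlam0 (hAa (θ^[k] ω))) n i
  have hPm : ∀ n, Measurable (P n) := fun n => posR_meas <| Measurable.iSup fun i => by
    refine xvec_meas (fun m i' j => ?_) n i
    unfold bMat
    split_ifs
    · exact (hAij m i' j).add measurable_const
    · exact measurable_const
  have hPS : ∀ n ω, P n ω ≤ S n ω := fun n ω => posR_le (hNS n ω) (hS0 n ω)
  have hPi : ∀ n, Integrable (P n) μ := fun n => (hSi n).mono' (hPm n).aestronglyMeasurable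
    (Eventually.of_forall fun ω => by
      rw [Real.norm_eq_abs, abs_of_nonneg (posR_nonneg _)]; exact hPS n ω)
  have hsub : ∀ m n ω, P (m + n) ω ≤ P m ω + P n (θ^[m] ω) := by
    intro m n ω
    refine posR_le (iSup_le fun i => ?_) (add_nonneg (posR_nonneg _) (posR_nonneg _))
    refine (xvec_add _ m n i).trans ?_
    rw [EReal.coe_add]
    refine add_le_add (le_posR (hNS m ω)) ?_
    refine le_trans ?_ (le_posR (hNS n (θ^[m] ω)))
    refine le_trans (le_of_eq ?_) (le_iSup _ i)
    congr 1
    funext k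
    rw [add_comm m k, Function.iterate_add_apply]
  have hPK : ∀ ω, P (k + 1) ω ≤ G (k + 1) ω + max (S (k + 1) ω - lam) 0 := by
    intro ω
    refine posR_le (iSup_le fun i => ?_) (add_nonneg (posR_nonneg _) (le_max_right _ _))
    refine (xvec_dom hlam0 (fun m => hAa (θ^[m] ω)) (k + 1) i).trans (max_le ?_ ?_)
    · have h1 : _ ≤ (G (k + 1) ω : EReal) :=
        (le_iSup (fun i => xvec (fun m => mpRestrict (clsIn r F i) (A (θ^[m] ω))) (k + 1) i
          + (((k + 1 : ℕ) * L : ℝ) : EReal)) i).trans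
          (le_posR (iSup_le fun i => hGsup (k + 1) ω i))
      refine h1.trans ?_
      rw [EReal.coe_le_coe_iff]
      linarith [le_max_right (S (k + 1) ω - lam) 0]
    · rw [EReal.coe_le_coe_iff]
      have h1 := le_max_left (S (k + 1) ω - lam) 0
      have h2 : 0 ≤ G (k + 1) ω := posR_nonneg _
      have h3 : S (k + 1) ω = ∑ m ∈ Finset.range (k + 1), (a (θ^[m] ω) + L) := rfl
      linarith
  have hGK : ∀ ω, G (k + 1) ω ≤ (k + 1) * max (min (G (k + 1) ω / (k + 1)) C) c1
      + ∑ j ∈ Finset.range (k + 1), max (b (θ^[j] ω) - C) 0 := by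
    intro ω
    have hk0 : (0 : ℝ) < k + 1 := by positivity
    have hs0 : 0 ≤ ∑ j ∈ Finset.range (k + 1), max (b (θ^[j] ω) - C) 0 :=
      Finset.sum_nonneg fun _ _ => le_max_right _ _
    have h1 : (k + 1) * min (G (k + 1) ω / (k + 1)) C ≤
        (k + 1) * max (min (G (k + 1) ω / (k + 1)) C) c1 :=
      mul_le_mul_of_nonneg_left (le_max_left _ _) hk0.le
    rcases le_total (G (k + 1) ω / (k + 1)) C with h2 | h2
    · rw [min_eq_left h2, mul_div_cancel₀ _ hk0.ne'] at h1
      rw [min_eq_left h2]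
      linarith
    · rw [min_eq_right h2] at h1 ⊢
      have h3 : S (k + 1) ω - (k + 1) * C ≤ ∑ j ∈ Finset.range (k + 1), max (b (θ^[j] ω) - C) 0 := by
        have : S (k + 1) ω - (k + 1) * C = ∑ j ∈ Finset.range (k + 1), (b (θ^[j] ω) - C) := by
          simp [hS, Finset.sum_sub_distrib]
        rw [this]
        exact Finset.sum_le_sum fun _ _ => le_max_left _ _
      have := hGS (k + 1) ω
      linarith
  have htail : Measurable fun ω => max (b ω - C) 0 := (hbm.sub_const _).max measurable_const
  have htaili : Integrable (fun ω => max (b ω - C) 0) μ :=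
    (hbi.sub (integrable_const _)).sup (integrable_zero _ _ _)
  have hint1 : Integrable (fun ω => max (min (G (k + 1) ω / (k + 1)) C) c1) μ :=
    ((((hGi _).div_const _).inf (integrable_const _)).sup (integrable_const _))
  have hint2 : Integrable (fun ω => max (S (k + 1) ω - lam) 0) μ :=
    ((hSi _).sub (integrable_const _)).sup (integrable_zero _ _ _)
  have hint3 : ∀ j, Integrable (fun ω => max (b (θ^[j] ω) - C) 0) μ := fun j =>
    (hmp.iterate j).integrable_comp_of_integrable htaili
  have hEj : ∀ j, ∫ ω, max (b (θ^[j] ω) - C) 0 ∂μ = ∫ ω, max (b ω - C) 0 ∂μ := by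
    intro j
    have := integral_map (μ := μ) (hmp.iterate j).measurable.aemeasurable
      (f := fun ω => max (b ω - C) 0) htail.aestronglyMeasurable
    rw [(hmp.iterate j).map_eq] at this
    exact this.symm
  have hEP : ∫ ω, P (k + 1) ω ∂μ < (k + 1) * (c1 + 3 * δ) := by
    have h1 : ∫ ω, P (k + 1) ω ∂μ ≤ ∫ ω, ((k + 1) * max (min (G (k + 1) ω / (k + 1)) C) c1
        + ∑ j ∈ Finset.range (k + 1), max (b (θ^[j] ω) - C) 0)
        + max (S (k + 1) ω - lam) 0 ∂μ := by
      refine integral_mono (hPi _) (((hint1.const_mul _).add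
        (integrable_finsetSum _ fun j _ => hint3 j)).add hint2) fun ω => ?_
      have := hPK ω
      have := hGK ω
      simp only [Pi.add_apply]
      linarith
    have hi4 : Integrable (fun ω => (k + 1) * max (min (G (k + 1) ω / (k + 1)) C) c1
        + ∑ j ∈ Finset.range (k + 1), max (b (θ^[j] ω) - C) 0) μ :=
      (hint1.const_mul _).add (integrable_finsetSum _ fun j _ => hint3 j)
    rw [integral_add hi4 hint2,
      integral_add (hint1.const_mul _) (integrable_finsetSum _ fun j _ => hint3 j),
      integral_const_mul, integral_finsetSum _ fun j _ => hint3 j] at h1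
    simp only [hEj, Finset.sum_const, Finset.card_range, nsmul_eq_mul] at h1
    push_cast at h1
    have hk0 : (0 : ℝ) < k + 1 := by positivity
    have h2 := mul_lt_mul_of_pos_left hk hk0
    have h3 := mul_lt_mul_of_pos_left hC hk0
    have h4 : δ ≤ (k + 1) * δ := by
      have : (0 : ℝ) ≤ k * δ := by positivity
      linarith
    linarith
  have hae : ∀ᵐ ω ∂μ, ∀ m i j, ¬ r i j → A (θ^[m] ω) i j = ⊥ := by
    rw [ae_all_iff]; intro m
    rw [ae_all_iff]; intro i
    rw [ae_all_iff]; intro j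
    by_cases h : r i j
    · exact Eventually.of_forall fun ω h' => absurd h h'
    · have h0 : μ {ω | A ω i j ≠ ⊥} = 0 := by
        by_contra h'
        exact h h'
      have h1 : ∀ᵐ ω ∂μ, A ω i j = ⊥ := by
        rw [ae_iff]; exact h0
      filter_upwards [(hmp.iterate m).quasiMeasurePreserving.ae h1] with ω hω _
      exact hω
  filter_upwards [kingman_upper hθ hPm hPi (fun n ω => posR_nonneg _) hsub k hEP, hae] with ω hω hω2
  have hall : ∀ i, ∀ᶠ n : ℕ in atTop,
      xvec (fun m => mpRestrict F (A (θ^[m] ω))) n i ≤ ((n * q : ℝ) : EReal) := by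
    intro i
    obtain ⟨M, hM⟩ := exists_nat_ge ((lam * lev r i) / δ)
    filter_upwards [hω, eventually_ge_atTop M] with n hn hnM
    have h1 := xvec_compare (f := fun m => mpRestrict F (A (θ^[m] ω)))
      (g := fun m => bMat r F L lam (A (θ^[m] ω))) (u := fun i => lam * lev r i) (L := L)
      (fun i => mul_nonneg hlam0 (Nat.cast_nonneg _)) (by
        intro m i j
        show mpRestrict F (A (θ^[m] ω)) i j ≤ bMat r F L lam (A (θ^[m] ω)) i j + _
        unfold mpRestrict bMat
        by_cases hij : r i j
        · by_cases hF : i ∈ F ∧ j ∈ F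
          · rw [if_pos hF, if_pos ⟨hF.1, hF.2, hij⟩, add_assoc, ← EReal.coe_add]
            rw [show (L - lam * (lev r i - lev r j) + (lam * lev r i - lam * lev r j - L) : ℝ) = 0
              by ring]
            simp
          · rw [if_neg hF]; exact bot_le
        · rw [hω2 m i j hij]; simp) n i
    refine h1.trans ?_
    have h2 : xvec (fun m => bMat r F L lam (A (θ^[m] ω))) n i ≤ (P n ω : EReal) :=
      (le_iSup (fun i => xvec (fun m => bMat r F L lam (A (θ^[m] ω))) n i) i).trans
        (le_posR (hNS n ω))
    refine (add_le_add h2 le_rfl).trans ?_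
    rw [← EReal.coe_add, EReal.coe_le_coe_iff]
    have h5 : lam * lev r i ≤ n * δ := by
      rw [← div_le_iff₀ hδ0]
      exact hM.trans (by exact_mod_cast hnM)
    have h6 : (n : ℝ) * (c1 + 3 * δ) + n * δ - n * L = n * q := by
      rw [hc1, hδ]; ring
    linarith
  exact eventually_all.2 hall

lemma clsIn_scc {d : ℕ} {r : Fin d → Fin d → Prop} {c : Set (Fin d)} {i : Fin d}
    (hi : i ∈ Fset r c) : IsSCC r (clsIn r (Fset r c) i) ∧ sccReach r c (clsIn r (Fset r c) i) := by
  have hi' := hi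
  obtain ⟨ct, ⟨i0, rfl⟩, ⟨x, hx, y, hy, hxy⟩, h3⟩ := hi
  have hxi : Relation.ReflTransGen r x i := hxy.trans (hy.2.trans h3.1)
  have key : ∀ j, Relation.ReflTransGen r i j → Relation.ReflTransGen r j i → j ∈ Fset r c := by
    intro j h1 h2
    exact ⟨_, ⟨i, rfl⟩, ⟨x, hx, i, ⟨.refl, .refl⟩, hxi⟩, ⟨h1, h2⟩⟩
  refine ⟨⟨i, ?_⟩, ⟨x, hx, i, ⟨hi', hi', .refl, .refl⟩, hxi⟩⟩
  ext j
  exact ⟨fun h => h.2.2, fun h => ⟨hi', key j h.1 h.2, h⟩⟩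

lemma gammaBrack_attained {d : ℕ} {r : Fin d → Fin d → Prop} (γ : Set (Fin d) → EReal)
    {c : Set (Fin d)} (hc : IsSCC r c) :
    ∃ c', IsSCC r c' ∧ sccReach r c c' ∧ γ c' = gammaBrack r γ c := by
  have hne : {c' | IsSCC r c' ∧ sccReach r c c'}.Nonempty := by
    obtain ⟨i, rfl⟩ := hc
    exact ⟨_, ⟨i, rfl⟩, i, ⟨.refl, .refl⟩, i, ⟨.refl, .refl⟩, .refl⟩
  have h1 := Set.Nonempty.csSup_mem (hne.image γ) (Set.toFinite _)
  rw [sSup_image] at h1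
  obtain ⟨c', h2, h3⟩ := h1
  exact ⟨c', h2.1, h2.2, h3⟩

end Main

/-- **Corollary (Lyapunov exponents of the submatrices `A^{[c]}` and `A^{{c}}`).**
For a stationary ergodic sequence `(A(n))_{n∈ℕ}` with integrable positive part of
`max_{ij} A_{ij}(0)`, for every s.c.c. `c` of `𝒢(A)`,
`γ(A^{{c}}) = γ(A^{[c]}) = γ^{[c]}`: the normalized maxima of the products of the
submatrices indexed by `F_c` and by `H_c` both converge a.s. to `γ^{[c]}`. -/
theorem lyapunov_exponent_of_submatrices
    {d : ℕ} {Ω : Type*} [MeasurableSpace Ω] (μ : Measure Ω) [IsProbabilityMeasure μ]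
    (θ : Ω → Ω) (hθ : Ergodic θ μ)
    (A : Ω → Fin d → Fin d → EReal) (hA : Measurable A)
    (hnotop : ∀ ω i j, A ω i j ≠ ⊤)
    (hint : Integrable (fun ω => ((⨆ i, ⨆ j, A ω i j) ⊔ 0).toReal) μ)
    (γ : Set (Fin d) → EReal)
    (hγ : ∀ c : Set (Fin d), IsSCC (arcRel μ A) c →
      ∀ᵐ ω ∂μ, Tendsto
        (fun n => mpScale n (⨆ i, ⨆ (_ : i ∈ c), xvec (fun m => mpRestrict c (A (θ^[m] ω))) n i))
        atTop (𝓝 (γ c))) :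
    ∀ c : Set (Fin d), IsSCC (arcRel μ A) c →
      (∀ᵐ ω ∂μ, Tendsto
        (fun n => mpScale n (⨆ i, ⨆ (_ : i ∈ Fset (arcRel μ A) c),
          xvec (fun m => mpRestrict (Fset (arcRel μ A) c) (A (θ^[m] ω))) n i))
        atTop (𝓝 (gammaBrack (arcRel μ A) γ c))) ∧
      (∀ᵐ ω ∂μ, Tendsto
        (fun n => mpScale n (⨆ i, ⨆ (_ : i ∈ Hset (arcRel μ A) γ c),
          xvec (fun m => mpRestrict (Hset (arcRel μ A) γ c) (A (θ^[m] ω))) n i))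
        atTop (𝓝 (gammaBrack (arcRel μ A) γ c))) := by
  intro c hc
  set r := arcRel μ A with hr
  set Γ := gammaBrack r γ c with hΓ
  set F := Fset r c with hF
  obtain ⟨c', hc', hcc', hγc'⟩ := gammaBrack_attained γ hc
  have hAm : ∀ i j, Measurable fun ω => A ω i j := fun i j =>
    (measurable_pi_apply j).comp ((measurable_pi_apply i).comp hA)
  have hup : ∀ q : ℚ, Γ < ((q : ℝ) : EReal) → ∀ᵐ ω ∂μ, ∀ᶠ n : ℕ in atTop, ∀ i,
      xvec (fun m => mpRestrict F (A (θ^[m] ω))) n i ≤ ((n * (q : ℝ) : ℝ) : EReal) := by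
    intro q hq
    obtain ⟨q0, h1, h2⟩ := EReal.lt_iff_exists_real_btwn.1 hq
    refine upper_main hθ hA (a := fun ω => ((⨆ i, ⨆ j, A ω i j) ⊔ 0).toReal) ?_ hint ?_ ?_ F
      (EReal.coe_lt_coe_iff.1 h2) ?_
    · exact posR_meas (Measurable.iSup fun i => Measurable.iSup fun j => hAm i j)
    · exact fun ω => posR_nonneg _
    · intro ω i j
      have h3 : (⨆ i, ⨆ j, A ω i j) ≠ ⊤ := by
        haveI : Nonempty (Fin d) := ⟨i⟩
        obtain ⟨i1, hi1⟩ := exists_eq_ciSup_of_finite (f := fun i => ⨆ j, A ω i j)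
        obtain ⟨j1, hj1⟩ := exists_eq_ciSup_of_finite (f := fun j => A ω i1 j)
        rw [← hi1, ← hj1]
        exact hnotop ω i1 j1
      exact (le_iSup_of_le i (le_iSup (fun j => A ω i j) j)).trans
        (le_posR (EReal.le_coe_toReal h3))
    · intro i hi
      obtain ⟨h3, h4⟩ := clsIn_scc hi
      have h5 : γ (clsIn r F i) ≤ Γ :=
        le_iSup_of_le (clsIn r F i) (le_iSup_of_le ⟨h3, h4⟩ le_rfl)
      filter_upwards [hγ _ h3] with ω hω
      filter_upwards [hω.eventually_lt_const (h5.trans_lt h1), eventually_ne_atTop 0] with n hn hn0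
      refine le_trans ?_ ((mpScale_le hn0 _ _).1 hn.le)
      exact le_iSup_of_le i (le_iSup_of_le ⟨hi, hi, .refl, .refl⟩ le_rfl)
  have key : ∀ T : Set (Fin d), c' ⊆ T → T ⊆ F → ∀ᵐ ω ∂μ, Tendsto
        (fun n => mpScale n (⨆ i, ⨆ (_ : i ∈ T), xvec (fun m => mpRestrict T (A (θ^[m] ω))) n i))
        atTop (𝓝 Γ) := by
    intro T hcT hTF
    have hup' : ∀ᵐ ω ∂μ, ∀ q : ℚ, Γ < ((q : ℝ) : EReal) → ∀ᶠ n : ℕ in atTop, ∀ i,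
        xvec (fun m => mpRestrict F (A (θ^[m] ω))) n i ≤ ((n * (q : ℝ) : ℝ) : EReal) := by
      rw [ae_all_iff]
      intro q
      by_cases hq : Γ < ((q : ℝ) : EReal)
      · filter_upwards [hup q hq] with ω hω _ using hω
      · exact Eventually.of_forall fun ω h => absurd h hq
    filter_upwards [hup', hγ c' hc'] with ω h1 h2
    rw [hγc'] at h2
    refine tendsto_order.2 ⟨fun x hx => ?_, fun x hx => ?_⟩
    · filter_upwards [h2.eventually_const_lt hx] with n hn
      refine hn.trans_le (mpScale_mono n ?_)
      refine iSup_le fun i => iSup_le fun hi => le_iSup_of_le i (le_iSup_of_le (hcT hi) ?_)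
      exact xvec_mono (fun k i j => mpRestrict_mono hcT _ i j) n i
    · obtain ⟨q, hq1, hq2⟩ := EReal.lt_iff_exists_rat_btwn.1 hx
      filter_upwards [h1 q hq1, eventually_ne_atTop 0] with n hn hn0
      refine lt_of_le_of_lt ((mpScale_le hn0 _ _).2 ?_) hq2
      refine iSup_le fun i => iSup_le fun hi => le_trans ?_ (hn i)
      exact xvec_mono (fun k i j => mpRestrict_mono hTF _ i j) n i
  refine ⟨key F ?_ le_rfl, key (Hset r γ c) ?_ ?_⟩
  · exact fun i hi => ⟨c', hc', hcc', hi⟩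
  · intro i hi
    refine ⟨c', hc', ?_, ⟨i, hi, .refl⟩, hγc'⟩
    obtain ⟨x, hx, y, hy, hxy⟩ := hcc'
    obtain ⟨i0, rfl⟩ := hc'
    exact ⟨x, hx, hxy.trans (hy.2.trans hi.1)⟩
  · rintro i ⟨ct, -, ⟨j, hj, hji⟩, -, -⟩
    exact ⟨_, ⟨i, rfl⟩, ⟨j, hj, i, ⟨.refl, .refl⟩, hji⟩, ⟨.refl, .refl⟩⟩
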